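/- arXiv:2012.11177 — 4 statements merged into one kernel-verified Lean document; each statement's English description precedes it below -/
import Mathlib

section
/- Let G be a graph on n vertices with maximum degree Δ and let 0 ≤ α ≤ 1/2. Then for every k with 1 ≤ k ≤ n, S_k(A_α(G)) ≥ (1−α)·S_k(Q(G)) + (2α−1)·k·Δ, where Q(G) = D(G) + A(G) is the signless Laplacian matrix of G. -/
open Matrix Finset Real

/-- The `A_α`-matrix of a graph: `A_α(G) = α·D(G) + (1−α)·A(G)`. -/
noncomputable def Aalpha {n : ℕ} (α : ℝ) (G : SimpleGraph (Fin n)) [DecidableRel G.Adj] :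
    Matrix (Fin n) (Fin n) ℝ :=
  α • Matrix.diagonal (fun i => (G.degree i : ℝ)) + (1 - α) • G.adjMatrix ℝ

/-- The sum of the `k` largest eigenvalues of a real symmetric matrix, expressed as
the supremum over all `k`-subsets of indices of the corresponding eigenvalue sums. -/
noncomputable def Sk {n : ℕ} (M : Matrix (Fin n) (Fin n) ℝ) (k : ℕ) : ℝ :=
  if h : M.IsHermitian then
    sSup {x : ℝ | ∃ s : Finset (Fin n), s.card = k ∧ x = ∑ i ∈ s, h.eigenvalues i}
  else 0

/-- The signless Laplacian matrix `Q(G) = D(G) + A(G)`. -/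
noncomputable def Qmat {n : ℕ} (G : SimpleGraph (Fin n)) [DecidableRel G.Adj] :
    Matrix (Fin n) (Fin n) ℝ :=
  Matrix.diagonal (fun i => (G.degree i : ℝ)) + G.adjMatrix ℝ


lemma sk_threshold {n : ℕ} (l w : Fin n → ℝ) (k : ℕ) (hk1 : 1 ≤ k) (hkn : k ≤ n)
    (h0 : ∀ j, 0 ≤ w j) (h1 : ∀ j, w j ≤ 1) (hs : ∑ j, w j = k) :
    ∃ t : Finset (Fin n), t.card = k ∧ ∑ j, l j * w j ≤ ∑ j ∈ t, l j := by
  obtain ⟨t, ht, hmax⟩ := Finset.exists_max_image (Finset.powersetCard k (Finset.univ : Finset (Fin n)))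
    (fun t => ∑ j ∈ t, l j) (Finset.powersetCard_nonempty.2 (by simpa using hkn))
  have htc : t.card = k := (Finset.mem_powersetCard.1 ht).2
  refine ⟨t, htc, ?_⟩
  have hne : t.Nonempty := Finset.card_pos.1 (by omega)
  obtain ⟨i, hi, hmin⟩ := Finset.exists_min_image t l hne
  have hout : ∀ j, j ∉ t → l j ≤ l i := by
    intro j hj
    have hj' : j ∉ t.erase i := fun h => hj (Finset.mem_of_mem_erase h)
    have h := hmax (insert j (t.erase i)) (by
      rw [Finset.mem_powersetCard]
      refine ⟨Finset.subset_univ _, ?_⟩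
      rw [Finset.card_insert_of_notMem hj', Finset.card_erase_of_mem hi]
      omega)
    simp only [Finset.sum_insert hj'] at h
    have := Finset.add_sum_erase t l hi
    linarith
  have key : ∑ j, (l j - l i) * (w j - if j ∈ t then 1 else 0) ≤ 0 := by
    apply Finset.sum_nonpos
    intro j _
    by_cases hj : j ∈ t
    · have := hmin j hj
      have := h1 j
      simp only [hj, if_true]
      nlinarith
    · have := hout j hj
      have := h0 j
      simp only [hj, if_false]
      nlinarith
  have e : ∑ j, (l j - l i) * (w j - if j ∈ t then 1 else 0)
      = ∑ j, l j * w j - ∑ j ∈ t, l j - l i * (∑ j, w j - t.card) := by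
    have a1 : ∑ j ∈ t, l j = ∑ j, l j * (if j ∈ t then 1 else 0) := by simp
    have a2 : (t.card : ℝ) = ∑ j, (if j ∈ t then (1:ℝ) else 0) := by simp
    rw [a1, a2, ← Finset.sum_sub_distrib, ← Finset.sum_sub_distrib, Finset.mul_sum,
      ← Finset.sum_sub_distrib]
    exact Finset.sum_congr rfl fun j _ => by ring
  rw [e, hs, htc] at key
  linarith

lemma quad_eq {n : ℕ} {A : Matrix (Fin n) (Fin n) ℝ} (hA : A.IsHermitian)
    (x : EuclideanSpace ℝ (Fin n)) :
    x.ofLp ⬝ᵥ (A *ᵥ x.ofLp) =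
      ∑ j, hA.eigenvalues j * (inner ℝ (hA.eigenvectorBasis j) x) ^ 2 := by
  have h := hA.eigenvectorBasis.sum_inner_mul_inner x (WithLp.toLp 2 (A *ᵥ x.ofLp))
  have h2 : inner ℝ x (WithLp.toLp 2 (A *ᵥ x.ofLp)) = x.ofLp ⬝ᵥ (A *ᵥ x.ofLp) := by
    rw [EuclideanSpace.inner_eq_star_dotProduct]
    simp [dotProduct_comm]
  rw [← h2, ← h]
  refine Finset.sum_congr rfl fun j _ => ?_
  have h3 : inner ℝ (hA.eigenvectorBasis j) (WithLp.toLp 2 (A *ᵥ x.ofLp))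
      = hA.eigenvalues j * inner ℝ (hA.eigenvectorBasis j) x := by
    rw [EuclideanSpace.inner_eq_star_dotProduct, EuclideanSpace.inner_eq_star_dotProduct]
    have hT : Aᵀ = A := by simpa [Matrix.conjTranspose_eq_transpose_of_trivial] using hA.eq
    have hm := hA.mulVec_eigenvectorBasis j
    simp only [star_trivial]
    rw [dotProduct_comm, dotProduct_mulVec, ← mulVec_transpose, hT, hm, smul_dotProduct,
      smul_eq_mul, dotProduct_comm]
  rw [h3, real_inner_comm]
  ring

lemma sk_bdd {n : ℕ} (l : Fin n → ℝ) (k : ℕ) :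
    BddAbove {x : ℝ | ∃ s : Finset (Fin n), s.card = k ∧ x = ∑ i ∈ s, l i} := by
  apply Set.Finite.bddAbove
  apply (Set.finite_range (fun s : Finset (Fin n) => ∑ i ∈ s, l i)).subset
  rintro x ⟨s, _, rfl⟩
  exact ⟨s, rfl⟩

lemma ky_fan {n : ℕ} {A : Matrix (Fin n) (Fin n) ℝ} (hA : A.IsHermitian)
    (b : OrthonormalBasis (Fin n) ℝ (EuclideanSpace ℝ (Fin n)))
    (s : Finset (Fin n)) (hs : 1 ≤ s.card) :
    ∑ i ∈ s, (b i).ofLp ⬝ᵥ (A *ᵥ (b i).ofLp) ≤ Sk A s.card := by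
  have hn : s.card ≤ n := by simpa using s.card_le_univ
  obtain ⟨t, htc, ht⟩ := sk_threshold hA.eigenvalues
    (fun j => ∑ i ∈ s, (inner ℝ (hA.eigenvectorBasis j) (b i)) ^ 2) s.card hs hn
    (fun j => Finset.sum_nonneg fun i _ => sq_nonneg _)
    (fun j => by
      have h := b.sum_sq_norm_inner_left (hA.eigenvectorBasis j)
      simp only [Real.norm_eq_abs, sq_abs, hA.eigenvectorBasis.norm_eq_one, one_pow] at h
      rw [← h]
      exact Finset.sum_le_sum_of_subset_of_nonneg (Finset.subset_univ _)
        fun i _ _ => sq_nonneg _)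
    (by
      rw [Finset.sum_comm]
      have : ∀ i ∈ s, ∑ j, (inner ℝ (hA.eigenvectorBasis j) (b i)) ^ 2 = 1 := by
        intro i _
        have h := hA.eigenvectorBasis.sum_sq_norm_inner_right (b i)
        simpa only [Real.norm_eq_abs, sq_abs, b.norm_eq_one, one_pow] using h
      rw [Finset.sum_congr rfl this]
      simp)
  rw [Sk, dif_pos hA]
  refine le_trans ?_ (le_csSup (sk_bdd _ _) ⟨t, htc, rfl⟩)
  refine le_trans (le_of_eq ?_) ht
  simp only [quad_eq hA, Finset.mul_sum]
  rw [Finset.sum_comm]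

theorem stmt13 {n : ℕ} (G : SimpleGraph (Fin n)) [DecidableRel G.Adj]
    (α : ℝ) (hα0 : 0 ≤ α) (hα1 : α ≤ 1 / 2)
    (k : ℕ) (hk1 : 1 ≤ k) (hkn : k ≤ n) :
    Sk (Aalpha α G) k ≥ (1 - α) * Sk (Qmat G) k + (2 * α - 1) * k * G.maxDegree := by
  have hD : (Matrix.diagonal (fun i => (G.degree i : ℝ))).IsHermitian :=
    Matrix.isHermitian_diagonal _
  have hAd : (G.adjMatrix ℝ).IsHermitian := by
    rw [Matrix.IsHermitian, Matrix.conjTranspose_eq_transpose_of_trivial,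
      SimpleGraph.transpose_adjMatrix]
  have hQ : (Qmat G).IsHermitian := hD.add hAd
  have hA : (Aalpha α G).IsHermitian := by
    unfold Aalpha
    rw [Matrix.IsHermitian, Matrix.conjTranspose_add, Matrix.conjTranspose_smul,
      Matrix.conjTranspose_smul, hD.eq, hAd.eq]
    simp
  have hdec : Aalpha α G = (1 - α) • Qmat G
      + (2 * α - 1) • Matrix.diagonal (fun i => (G.degree i : ℝ)) := by
    unfold Aalpha Qmat
    module
  have hmain : ∀ s : Finset (Fin n), s.card = k →
      (1 - α) * ∑ i ∈ s, hQ.eigenvalues i + (2 * α - 1) * k * G.maxDegree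
        ≤ Sk (Aalpha α G) k := by
    rintro s rfl
    refine le_trans ?_ (ky_fan hA hQ.eigenvectorBasis s hk1)
    have hc : (2 * α - 1) * (s.card : ℝ) * G.maxDegree
        = ∑ i ∈ s, (2 * α - 1) * (G.maxDegree : ℝ) := by
      simp; ring
    rw [hc, Finset.mul_sum, ← Finset.sum_add_distrib]
    refine Finset.sum_le_sum fun i _ => ?_
    set x := hQ.eigenvectorBasis i with hx
    have hn : x.ofLp ⬝ᵥ x.ofLp = 1 := by
      have h := hQ.eigenvectorBasis.norm_eq_one i
      have h2 := real_inner_self_eq_norm_sq x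
      rw [hx, h, ← hx, EuclideanSpace.inner_eq_star_dotProduct] at h2
      simpa using h2
    have hm := hQ.mulVec_eigenvectorBasis i
    rw [← hx] at hm
    rw [hdec, add_mulVec, smul_mulVec, smul_mulVec, hm, dotProduct_add, dotProduct_smul,
      dotProduct_smul, dotProduct_smul, hn]
    have hd : x.ofLp ⬝ᵥ (Matrix.diagonal (fun i => (G.degree i : ℝ)) *ᵥ x.ofLp)
        ≤ G.maxDegree := by
      have : (G.maxDegree : ℝ) = G.maxDegree * (x.ofLp ⬝ᵥ x.ofLp) := by rw [hn, mul_one]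
      rw [this, dotProduct, dotProduct, Finset.mul_sum]
      refine Finset.sum_le_sum fun j _ => ?_
      rw [mulVec_diagonal]
      have : (G.degree j : ℝ) ≤ G.maxDegree := by exact_mod_cast G.degree_le_maxDegree j
      nlinarith [mul_self_nonneg (x.ofLp j)]
    simp only [smul_eq_mul, mul_one]
    nlinarith
  have hne : {x : ℝ | ∃ s : Finset (Fin n), s.card = k ∧ x = ∑ i ∈ s, hQ.eigenvalues i}.Nonempty := by
    obtain ⟨s, hs⟩ := Finset.powersetCard_nonempty.2
      (show k ≤ (Finset.univ : Finset (Fin n)).card by simpa using hkn)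
    exact ⟨_, s, (Finset.mem_powersetCard.1 hs).2, rfl⟩
  have hfin : {x : ℝ | ∃ s : Finset (Fin n), s.card = k ∧ x = ∑ i ∈ s, hQ.eigenvalues i}.Finite := by
    apply (Set.finite_range (fun s : Finset (Fin n) => ∑ i ∈ s, hQ.eigenvalues i)).subset
    rintro x ⟨s, _, rfl⟩
    exact ⟨s, rfl⟩
  obtain ⟨s, hs, he⟩ := hne.csSup_mem hfin
  have : Sk (Qmat G) k = ∑ i ∈ s, hQ.eigenvalues i := by
    rw [Sk, dif_pos hQ, he]
  rw [this]
  exact hmain s hs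
end

section
/- Let G be a connected bipartite graph with bipartition V(G) = X ∪ Y, where |X| = s and |Y| = t, let m be the number of edges of G and β its matching number, and let 0 ≤ α ≤ 1. Then for every k with 1 ≤ k ≤ β + 1, S_k(A_α(G)) ≥ (αm/2)·(1/s + 1/t) + (1−α)m/√(st) + (k−1)·( α − 2(1−α)√(st)/(s+t) ). -/
open Matrix Finset Real

/-- The matching number of a graph: the largest number of pairwise disjoint edges. -/
noncomputable def matchingNumber {n : ℕ} (G : SimpleGraph (Fin n)) : ℕ :=
  sSup {k | ∃ M : G.Subgraph, M.IsMatching ∧ M.edgeSet.ncard = k}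

lemma topset {n : ℕ} (l : Fin n → ℝ) : ∀ k, k ≤ n → ∃ T : Finset (Fin n), T.card = k ∧
    ∀ i ∈ T, ∀ j ∉ T, l j ≤ l i := by
  intro k
  induction k with
  | zero => intro _; exact ⟨∅, by simp, by simp⟩
  | succ k ih =>
    intro hk
    obtain ⟨T, hT, h⟩ := ih (by omega)
    have hne : (Tᶜ).Nonempty := by
      rw [← Finset.card_pos, Finset.card_compl, Fintype.card_fin]; omega
    obtain ⟨a, ha, hmax⟩ := Finset.exists_max_image Tᶜ l hne
    rw [Finset.mem_compl] at ha
    refine ⟨insert a T, by rw [Finset.card_insert_of_notMem ha, hT], ?_⟩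
    intro i hi j hj
    rw [Finset.mem_insert, not_or] at hj
    rcases Finset.mem_insert.1 hi with rfl | hi
    · exact hmax j (by simpa using hj.2)
    · exact h i hi j hj.2

lemma sum_top {n : ℕ} (l c : Fin n → ℝ) (k : ℕ) (h1 : 1 ≤ k) (hk : k ≤ n) (c0 : ∀ j, 0 ≤ c j)
    (c1 : ∀ j, c j ≤ 1) (hc : ∑ j, c j = k) :
    ∃ T : Finset (Fin n), T.card = k ∧ ∑ j, l j * c j ≤ ∑ j ∈ T, l j := by
  obtain ⟨T, hT, h⟩ := topset l k hk
  refine ⟨T, hT, ?_⟩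
  obtain ⟨a, ha, hmin⟩ := Finset.exists_min_image T l (by rw [← Finset.card_pos]; omega)
  have e1 : ∑ j ∈ T, l j = ∑ j, l j * (if j ∈ T then 1 else 0) := by simp
  have e2 : ∑ j, (if j ∈ T then (1:ℝ) else 0) = k := by simp [hT]
  have : ∑ j, (l j - l a) * (c j - if j ∈ T then 1 else 0) ≤ 0 := by
    apply Finset.sum_nonpos
    intro j _
    by_cases hj : j ∈ T
    · simp only [hj, if_true]
      exact mul_nonpos_of_nonneg_of_nonpos (by linarith [hmin j hj]) (by linarith [c1 j])
    · simp only [hj, if_false]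
      exact mul_nonpos_of_nonpos_of_nonneg (by linarith [h a ha j hj]) (by linarith [c0 j])
  have e3 : ∑ j, (l j - l a) * (c j - if j ∈ T then (1:ℝ) else 0) =
      (∑ j, l j * c j - ∑ j, l j * (if j ∈ T then (1:ℝ) else 0))
      - l a * (∑ j, c j - ∑ j, (if j ∈ T then (1:ℝ) else 0)) := by
    rw [← Finset.sum_sub_distrib, ← Finset.sum_sub_distrib, Finset.mul_sum,
      ← Finset.sum_sub_distrib]
    exact Finset.sum_congr rfl fun _ _ => by ring
  rw [e3, hc, e2, ← e1] at this
  linarith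

lemma kyfan {n : ℕ} (M : Matrix (Fin n) (Fin n) ℝ) (h : M.IsHermitian) {ι : Type} [Fintype ι]
    [DecidableEq ι] (v : ι → Fin n → ℝ)
    (hv : ∀ i j, v i ⬝ᵥ v j = if i = j then 1 else 0) (h1 : 1 ≤ Fintype.card ι) :
    ∑ i, v i ⬝ᵥ (M *ᵥ v i) ≤ Sk M (Fintype.card ι) := by
  set b := h.eigenvectorBasis with hb
  let V : ι → EuclideanSpace ℝ (Fin n) := fun i => WithLp.toLp 2 (v i)
  have hV : Orthonormal ℝ V := by
    rw [orthonormal_iff_ite]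
    intro i j
    rw [← hv i j]
    simp [V, EuclideanSpace.inner_eq_star_dotProduct, dotProduct_comm]
  have hcard : Fintype.card ι ≤ n := by
    simpa using hV.linearIndependent.fintype_card_le_finrank
  let c : Fin n → ℝ := fun j => ∑ i, (inner ℝ (V i) (b j))^2
  have hcs : ∑ j, c j = (Fintype.card ι : ℕ) := by
    simp only [c]
    rw [Finset.sum_comm]
    have : ∀ i, ∑ j, (inner ℝ (V i) (b j))^2 = 1 := by
      intro i
      have := b.sum_sq_norm_inner_left (V i)
      simpa [hV.1 i] using this
    simp [this]
  have hc1 : ∀ j, c j ≤ 1 := by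
    intro j
    have := hV.sum_inner_products_le (x := b j) (s := Finset.univ)
    simpa [c, b.orthonormal.1 j] using this
  obtain ⟨T, hT, hle⟩ := sum_top h.eigenvalues c _ h1 hcard
    (fun j => Finset.sum_nonneg fun _ _ => sq_nonneg _) hc1 hcs
  have key : ∀ i, v i ⬝ᵥ (M *ᵥ v i) = ∑ j, h.eigenvalues j * (inner ℝ (V i) (b j))^2 := by
    intro i
    have e : v i ⬝ᵥ (M *ᵥ v i) = inner ℝ (V i) (WithLp.toLp 2 (M *ᵥ v i)) := by
      simp [V, EuclideanSpace.inner_eq_star_dotProduct, dotProduct_comm]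
    rw [e, ← b.sum_inner_mul_inner]
    refine Finset.sum_congr rfl fun j _ => ?_
    have : inner ℝ (b j) (WithLp.toLp 2 (M *ᵥ v i)) = h.eigenvalues j * inner ℝ (V i) (b j) := by
      have h2 := h.mulVec_eigenvectorBasis j
      have h3 : Mᵀ = M := (by simpa using h : M.IsSymm)
      simp only [V, EuclideanSpace.inner_eq_star_dotProduct, star_trivial]
      rw [dotProduct_comm, Matrix.dotProduct_mulVec, ← Matrix.mulVec_transpose, h3, hb, h2]
      simp
    rw [this]; ring
  have : ∑ i, v i ⬝ᵥ (M *ᵥ v i) = ∑ j, h.eigenvalues j * c j := by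
    simp only [key, c, Finset.mul_sum]
    rw [Finset.sum_comm]
  rw [this]
  refine hle.trans ?_
  rw [Sk, dif_pos h]
  refine le_csSup ?_ ⟨T, hT, rfl⟩
  apply Set.Finite.bddAbove
  refine (Set.finite_range (fun s : Finset (Fin n) => ∑ i ∈ s, h.eigenvalues i)).subset ?_
  rintro x ⟨s, -, rfl⟩
  exact ⟨s, rfl⟩

lemma aalpha_herm {n : ℕ} (α : ℝ) (G : SimpleGraph (Fin n)) [DecidableRel G.Adj] :
    (Aalpha α G).IsHermitian := by
  ext i j
  by_cases h : i = j
  · subst h; simp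
  · simp [Aalpha, Matrix.diagonal_apply, h, Ne.symm h, G.adj_comm]

lemma quad_pair {n : ℕ} (M : Matrix (Fin n) (Fin n) ℝ) (x y : Fin n) (a b : ℝ) :
    (Pi.single x a - Pi.single y b) ⬝ᵥ (M *ᵥ (Pi.single x a - Pi.single y b)) =
      a ^ 2 * M x x - a * b * M x y - a * b * M y x + b ^ 2 * M y y := by
  simp [Matrix.mulVec_sub, sub_dotProduct]
  ring

lemma quad_w {n : ℕ} (G : SimpleGraph (Fin n)) [DecidableRel G.Adj]
    (X Y : Finset (Fin n)) (hXY : Disjoint X Y) (hcover : X ∪ Y = Finset.univ)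
    (hbip : ∀ u v, G.Adj u v → (u ∈ X ∧ v ∈ Y) ∨ (u ∈ Y ∧ v ∈ X)) (α p r : ℝ) (w : Fin n → ℝ)
    (hX : ∀ i ∈ X, w i = p) (hY : ∀ i ∈ Y, w i = r) :
    w ⬝ᵥ (Aalpha α G *ᵥ w) = α * G.edgeFinset.card * (p^2 + r^2)
      + (1 - α) * (2 * G.edgeFinset.card) * (p * r) := by
  have hB : G.IsBipartiteWith (X : Set (Fin n)) (Y : Set (Fin n)) :=
    ⟨by exact_mod_cast hXY, fun u v h => by simpa using hbip u v h⟩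
  have sX := SimpleGraph.isBipartiteWith_sum_degrees_eq_card_edges hB
  have sY := SimpleGraph.isBipartiteWith_sum_degrees_eq_card_edges' hB
  have sA := G.sum_degrees_eq_twice_card_edges
  have e1 : ∀ i, (Aalpha α G *ᵥ w) i = α * G.degree i * w i + (1-α) * ∑ j ∈ G.neighborFinset i, w j := by
    intro i
    simp [Aalpha, Matrix.add_mulVec, Matrix.smul_mulVec, Matrix.mulVec_diagonal, mul_assoc]
  have e2 : ∀ i, w i * ∑ j ∈ G.neighborFinset i, w j = G.degree i * (p * r) := by
    intro i
    rw [Finset.mul_sum, Finset.sum_congr rfl (g := fun _ => p * r)]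
    · simp
    · intro j hj
      rw [SimpleGraph.mem_neighborFinset] at hj
      rcases hbip i j hj with ⟨h1, h2⟩ | ⟨h1, h2⟩
      · rw [hX _ h1, hY _ h2]
      · rw [hX _ h2, hY _ h1]; ring
  have e3 : w ⬝ᵥ (Aalpha α G *ᵥ w) = α * ∑ i, G.degree i * w i ^ 2
      + (1-α) * ((∑ i, (G.degree i : ℝ)) * (p * r)) := by
    rw [Finset.sum_mul, Finset.mul_sum, Finset.mul_sum, ← Finset.sum_add_distrib]
    refine Finset.sum_congr rfl fun i _ => ?_
    rw [e1, ← e2]; ring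
  have e4 : ∑ i, (G.degree i : ℝ) * w i ^ 2 = G.edgeFinset.card * (p^2 + r^2) := by
    rw [← hcover, Finset.sum_union hXY, Finset.sum_congr rfl (fun i hi => by rw [hX i hi]),
      Finset.sum_congr (s₁ := Y) rfl (fun i hi => by rw [hY i hi]), ← Finset.sum_mul, ← Finset.sum_mul]
    rw [← Nat.cast_sum, ← Nat.cast_sum, sX, sY]; ring
  rw [e3, e4, ← Nat.cast_sum, sA]
  push_cast; ring

lemma matching_pairs {n : ℕ} (G : SimpleGraph (Fin n)) 
    (X Y : Finset (Fin n)) (hXY : Disjoint X Y)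
    (hbip : ∀ u v, G.Adj u v → (u ∈ X ∧ v ∈ Y) ∨ (u ∈ Y ∧ v ∈ X))
    (l : ℕ) (hl : l ≤ matchingNumber G) :
    ∃ f g : Fin l → Fin n, Function.Injective f ∧ Function.Injective g ∧
      (∀ i, f i ∈ X) ∧ (∀ i, g i ∈ Y) ∧ ∀ i, G.Adj (f i) (g i) := by
  have hmem : matchingNumber G ∈ {k | ∃ M : G.Subgraph, M.IsMatching ∧ M.edgeSet.ncard = k} := by
    apply Nat.sSup_mem
    · exact ⟨0, ⊥, by intro v hv; simp at hv, by simp⟩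
    · refine ⟨Nat.card (Sym2 (Fin n)), ?_⟩
      rintro k ⟨M, -, rfl⟩
      rw [← Set.ncard_univ]
      exact Set.ncard_le_ncard (Set.subset_univ _) (Set.toFinite _)
  obtain ⟨M, hM, hc⟩ := hmem
  have huniq : ∀ a b c, M.Adj a b → M.Adj a c → b = c := fun a b c h1 h2 =>
    (hM (M.edge_vert h1)).unique h1 h2
  have hp : ∀ e : M.edgeSet, ∃ x y, x ∈ X ∧ y ∈ Y ∧ M.Adj x y ∧ e.1 = s(x, y) := by
    rintro ⟨e, he⟩
    induction e using Sym2.ind with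
    | _ x y =>
      rw [SimpleGraph.Subgraph.mem_edgeSet] at he
      rcases hbip x y he.adj_sub with ⟨h1, h2⟩ | ⟨h1, h2⟩
      · exact ⟨x, y, h1, h2, he, rfl⟩
      · exact ⟨y, x, h2, h1, he.symm, Sym2.eq_swap⟩
  choose f g hf hg hfg he using hp
  have : Nonempty (Fin l ↪ M.edgeSet) := by
    haveI : Fintype M.edgeSet := Fintype.ofFinite _
    apply Function.Embedding.nonempty_of_card_le
    rw [Fintype.card_fin, ← Nat.card_eq_fintype_card, Nat.card_coe_set_eq, hc]
    exact hl
  obtain ⟨φ⟩ := this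
  refine ⟨f ∘ φ, g ∘ φ, ?_, ?_, fun i => hf _, fun i => hg _, fun i => (hfg _).adj_sub⟩
  · intro i j hij
    apply φ.injective
    apply Subtype.ext
    simp only [Function.comp] at hij
    have := huniq _ _ _ (hfg (φ i)) (hij ▸ hfg (φ j))
    rw [he, he, hij, this]
  · intro i j hij
    apply φ.injective
    apply Subtype.ext
    simp only [Function.comp] at hij
    have := huniq _ _ _ (hfg (φ i)).symm (hij ▸ (hfg (φ j)).symm)
    rw [he, he, hij, this]

theorem stmt15 {n : ℕ} (G : SimpleGraph (Fin n)) [DecidableRel G.Adj] (hG : G.Connected)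
    (X Y : Finset (Fin n)) (hXY : Disjoint X Y) (hcover : X ∪ Y = Finset.univ)
    (hbip : ∀ u v, G.Adj u v → (u ∈ X ∧ v ∈ Y) ∨ (u ∈ Y ∧ v ∈ X))
    (s t : ℕ) (hs : X.card = s) (ht : Y.card = t)
    (m : ℕ) (hm : G.edgeFinset.card = m)
    (β : ℕ) (hβ : β = matchingNumber G)
    (α : ℝ) (hα0 : 0 ≤ α) (hα1 : α ≤ 1)
    (k : ℕ) (hk1 : 1 ≤ k) (hkβ : k ≤ β + 1) :
    Sk (Aalpha α G) k ≥
      α * m / 2 * (1 / (s : ℝ) + 1 / (t : ℝ)) + (1 - α) * m / Real.sqrt ((s : ℝ) * t)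
        + ((k : ℝ) - 1) * (α - 2 * (1 - α) * Real.sqrt ((s : ℝ) * t) / ((s : ℝ) + t)) := by
  obtain ⟨l, rfl⟩ : ∃ l, k = l + 1 := ⟨k - 1, by omega⟩
  obtain ⟨f, g, fi, gi, fX, gY, hadj⟩ := matching_pairs G X Y hXY hbip l (by omega)
  have hfg : ∀ i j, f i ≠ g j := fun i j h => Finset.disjoint_left.1 hXY (fX i) (h ▸ gY j)
  have hcard : Fintype.card (Option (Fin l)) = l + 1 := by simp
  by_cases h0 : s = 0 ∨ t = 0
  · have noadj : ∀ u v, ¬ G.Adj u v := by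
      intro u v h
      rcases h0 with h0 | h0
      · rw [h0, Finset.card_eq_zero] at hs
        subst hs; simpa using hbip u v h
      · rw [h0, Finset.card_eq_zero] at ht
        subst ht; simpa using hbip u v h
    have hl : l = 0 := by
      rcases Nat.eq_zero_or_pos l with h | h
      · exact h
      · exact absurd (hadj ⟨0, h⟩) (noadj _ _)
    subst hl
    have hm0 : m = 0 := by
      rw [← hm, Finset.card_eq_zero, SimpleGraph.edgeFinset_eq_empty]
      ext u v; simp [noadj]
    obtain ⟨x⟩ := hG.nonempty
    have := kyfan (Aalpha α G) (aalpha_herm α G) (ι := Unit) (fun _ => Pi.single x 1) (by simp) (by simp)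
    simp at this
    subst hm0
    have h2 : 0 ≤ Aalpha α G x x := by simp [Aalpha]; positivity
    simp
    linarith
  · push Not at h0
    have hs0 : (0:ℝ) < s := by exact_mod_cast Nat.pos_of_ne_zero h0.1
    have ht0 : (0:ℝ) < t := by exact_mod_cast Nat.pos_of_ne_zero h0.2
    obtain ⟨S, hS0, hS⟩ : ∃ S : ℝ, 0 < S ∧ S ^ 2 = s := ⟨√s, by positivity, Real.sq_sqrt hs0.le⟩
    obtain ⟨R, hR0, hR⟩ : ∃ S : ℝ, 0 < S ∧ S ^ 2 = t := ⟨√t, by positivity, Real.sq_sqrt ht0.le⟩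
    obtain ⟨q, hq0, hq⟩ : ∃ S : ℝ, 0 < S ∧ S ^ 2 = s + t :=
      ⟨√(s+t), by positivity, Real.sq_sqrt (by positivity)⟩
    obtain ⟨d, hd0, hd⟩ : ∃ S : ℝ, 0 < S ∧ S ^ 2 = 2 := ⟨√2, by positivity, Real.sq_sqrt (by positivity)⟩
    have hSR : √((s:ℝ) * t) = S * R := by
      rw [← hS, ← hR, ← mul_pow, Real.sqrt_sq (by positivity)]
    let p := 1 / (d * S)
    let r := 1 / (d * R)
    let a := S / q
    let b := R / q
    let w : Fin n → ℝ := fun i => if i ∈ X then p else r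
    have wX : ∀ i ∈ X, w i = p := fun i hi => by simp [w, hi]
    have wY : ∀ i ∈ Y, w i = r := fun i hi => by
      simp [w, Finset.disjoint_right.1 hXY hi]
    have pp : p ^ 2 = 1 / (2 * s) := by simp only [p, div_pow, mul_pow, hd, hS, one_pow]
    have rr : r ^ 2 = 1 / (2 * t) := by simp only [r, div_pow, mul_pow, hd, hR, one_pow]
    have pr : p * r = 1 / (2 * (S * R)) := by rw [← hd]; simp only [p, r]; field_simp
    have aa : a ^ 2 = s / (s + t) := by simp only [a, div_pow, hS, hq]
    have bb : b ^ 2 = t / (s + t) := by simp only [b, div_pow, hR, hq]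
    have ab : a * b = S * R / (s + t) := by rw [← hq]; simp only [a, b]; field_simp
    have par : p * a = r * b := by simp only [p, r, a, b]; field_simp
    have ab1 : a ^ 2 + b ^ 2 = 1 := by rw [aa, bb]; field_simp
    let v : Option (Fin l) → Fin n → ℝ := fun o =>
      o.elim w (fun i => Pi.single (f i) a - Pi.single (g i) b)
    have ww : w ⬝ᵥ w = 1 := by
      have : w ⬝ᵥ w = ∑ i, w i ^ 2 := Finset.sum_congr rfl fun i _ => by ring
      rw [this, ← hcover, Finset.sum_union hXY, Finset.sum_congr rfl (fun i hi => by rw [wX i hi]),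
        Finset.sum_congr (s₁ := Y) rfl (fun i hi => by rw [wY i hi])]
      simp only [Finset.sum_const, hs, ht, nsmul_eq_mul, pp, rr]
      field_simp; norm_num
    have wu : ∀ i, w ⬝ᵥ (Pi.single (f i) a - Pi.single (g i) b) = 0 := by
      intro i
      simp [dotProduct_sub, wX _ (fX i), wY _ (gY i), par]
    have hv : ∀ i j, v i ⬝ᵥ v j = if i = j then 1 else 0 := by
      rintro (_ | i) (_ | j)
      · simpa [v] using ww
      · simpa [v] using wu j
      · rw [dotProduct_comm]; simpa [v] using wu i
      · by_cases hij : i = j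
        · subst hij
          simp [v, dotProduct_sub, sub_dotProduct, Pi.single_apply, hfg, (hfg _ _).symm]
          linarith
        · simp [v, dotProduct_sub, sub_dotProduct, Pi.single_apply, hfg, (hfg _ _).symm, fi.eq_iff,
            gi.eq_iff, hij, Ne.symm hij]
    have hk := kyfan (Aalpha α G) (aalpha_herm α G) v hv (by simp)
    rw [hcard, Fintype.sum_option] at hk
    have hw : v none ⬝ᵥ (Aalpha α G *ᵥ v none) =
        α * m / 2 * (1 / (s : ℝ) + 1 / (t : ℝ)) + (1 - α) * m / (S * R) := by
      change w ⬝ᵥ (Aalpha α G *ᵥ w) = _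
      rw [quad_w G X Y hXY hcover hbip α p r w wX wY, hm, pp, rr, pr]
      field_simp
    have hu : ∀ i, α - 2 * (1 - α) * (S * R) / ((s : ℝ) + t) ≤
        v (some i) ⬝ᵥ (Aalpha α G *ᵥ v (some i)) := by
      intro i
      change _ ≤ (Pi.single (f i) a - Pi.single (g i) b) ⬝ᵥ
        (Aalpha α G *ᵥ (Pi.single (f i) a - Pi.single (g i) b))
      rw [quad_pair, ab]
      have d1 : (1:ℝ) ≤ G.degree (f i) := by
        exact_mod_cast (G.degree_pos_iff_exists_adj _).2 ⟨_, hadj i⟩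
      have d2 : (1:ℝ) ≤ G.degree (g i) := by
        exact_mod_cast (G.degree_pos_iff_exists_adj _).2 ⟨_, (hadj i).symm⟩
      have m1 : Aalpha α G (f i) (f i) = α * G.degree (f i) := by simp [Aalpha]
      have m2 : Aalpha α G (g i) (g i) = α * G.degree (g i) := by simp [Aalpha]
      have m3 : Aalpha α G (f i) (g i) = 1 - α := by
        simp [Aalpha, Matrix.diagonal_apply, hfg, hadj]
      have m4 : Aalpha α G (g i) (f i) = 1 - α := by
        simp [Aalpha, Matrix.diagonal_apply, (hfg _ _).symm, (hadj i).symm]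
      rw [m1, m2, m3, m4]
      have k1 : a ^ 2 * α ≤ a ^ 2 * (α * G.degree (f i)) :=
        mul_le_mul_of_nonneg_left (le_mul_of_one_le_right hα0 d1) (sq_nonneg _)
      have k2 : b ^ 2 * α ≤ b ^ 2 * (α * G.degree (g i)) :=
        mul_le_mul_of_nonneg_left (le_mul_of_one_le_right hα0 d2) (sq_nonneg _)
      have k3 : a ^ 2 * α + b ^ 2 * α = α := by rw [← add_mul, ab1, one_mul]
      have k4 : 2 * (1 - α) * (S * R) / ((s : ℝ) + t) = 2 * (S * R / (s + t) * (1 - α)) := by ring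
      linarith
    have hsum := Finset.sum_le_sum (s := Finset.univ) fun i _ => hu i
    simp only [Finset.sum_const, Finset.card_univ, Fintype.card_fin, nsmul_eq_mul] at hsum
    rw [hw] at hk
    rw [hSR]
    push_cast
    rw [add_sub_cancel_right]
    linarith
end

section
/- Let 0 ≤ α < 1 and let G be a connected graph on n vertices with m edges. For every integer k with 1 ≤ k ≤ n and every vertex subset U ⊆ V(G) with |U| = k − 1, S_k(A_α(G)) ≥ ( α − 1/(n−k+1) )·Σ_{u∈U} d_u + ( 2m − (1−α)·|∂(U, V(G)∖U)| ) / (n−k+1), where d_u denotes the degree of the vertex u and ∂(U, V(G)∖U) is the set of edges of G joining a vertex of U with a vertex of V(G)∖U. -/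
open Matrix Finset Real

lemma kf_aux {n : ℕ} (l w : Fin n → ℝ) (k : ℕ) (hk1 : 1 ≤ k) (hkn : k ≤ n)
    (h0 : ∀ i, 0 ≤ w i) (h1 : ∀ i, w i ≤ 1) (hs : ∑ i, w i = k) :
    ∃ s : Finset (Fin n), s.card = k ∧ ∑ i, l i * w i ≤ ∑ i ∈ s, l i := by
  classical
  have hne : (Finset.powersetCard k (Finset.univ : Finset (Fin n))).Nonempty := by
    rw [Finset.powersetCard_nonempty]; simpa using hkn
  obtain ⟨s, hsm, hmax⟩ := Finset.exists_max_image _ (fun s => ∑ i ∈ s, l i) hne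
  have hc : s.card = k := (Finset.mem_powersetCard.1 hsm).2
  refine ⟨s, hc, ?_⟩
  have hsne : s.Nonempty := by rw [← Finset.card_pos]; omega
  obtain ⟨a, ha, hamin⟩ := Finset.exists_min_image s l hsne
  have hout : ∀ j, j ∉ s → l j ≤ l a := by
    intro j hj
    have hj' : j ∉ s.erase a := fun h => hj (Finset.mem_of_mem_erase h)
    have := hmax (insert j (s.erase a)) (by
      rw [Finset.mem_powersetCard]
      refine ⟨Finset.subset_univ _, ?_⟩
      rw [Finset.card_insert_of_notMem hj', Finset.card_erase_of_mem ha]; omega)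
    rw [Finset.sum_insert hj', ← Finset.add_sum_erase s l ha] at this
    linarith
  have key : ∑ i, (l i - l a) * (w i - if i ∈ s then 1 else 0) ≤ 0 := by
    apply Finset.sum_nonpos
    intro i _
    by_cases hi : i ∈ s
    · simp only [hi, if_true]
      nlinarith [hamin i hi, h1 i]
    · simp only [hi, if_false]
      nlinarith [hout i hi, h0 i]
  have e : ∑ i, (l i - l a) * (w i - if i ∈ s then 1 else 0)
      = ∑ i, l i * w i - ∑ i ∈ s, l i - l a * (∑ i, w i - s.card) := by
    simp only [sub_mul, mul_sub, Finset.sum_sub_distrib, ← Finset.mul_sum, mul_ite, mul_one,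
      mul_zero, Finset.sum_ite_mem, Finset.univ_inter]
    simp
    ring
  rw [e, hs, hc] at key
  linarith

lemma kf_main {n : ℕ} (M : Matrix (Fin n) (Fin n) ℝ) (hM : M.IsHermitian)
    (k : ℕ) (hk1 : 1 ≤ k) (hkn : k ≤ n) (U : Finset (Fin n)) (hU : U.card = k - 1) :
    ∑ x ∈ U, M x x + (∑ x ∈ Uᶜ, ∑ y ∈ Uᶜ, M x y) / ((n : ℝ) - k + 1) ≤ Sk M k := by
  set P : Matrix (Fin n) (Fin n) ℝ := (hM.eigenvectorUnitary : Matrix (Fin n) (Fin n) ℝ) with hP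
  have hPP : P * Pᵀ = 1 := by
    have := Unitary.coe_mul_star_self hM.eigenvectorUnitary
    simpa [Matrix.star_eq_conjTranspose] using this
  have hPP' : Pᵀ * P = 1 := by
    have := Unitary.coe_star_mul_self hM.eigenvectorUnitary
    simpa [Matrix.star_eq_conjTranspose] using this
  have hspec : M = P * diagonal hM.eigenvalues * Pᵀ := by
    have := hM.spectral_theorem
    rw [Unitary.conjStarAlgAut_apply] at this
    simpa [Matrix.star_eq_conjTranspose, Function.comp_def] using this
  have hent : ∀ x y, M x y = ∑ i, hM.eigenvalues i * (P x i * P y i) := by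
    intro x y
    conv_lhs => rw [hspec]
    rw [Matrix.mul_apply]
    refine Finset.sum_congr rfl fun i _ => ?_
    rw [Matrix.mul_diagonal, Matrix.transpose_apply]; ring
  have hrow : ∀ x y, ∑ i, P x i * P y i = if x = y then 1 else 0 := by
    intro x y
    have := congrFun (congrFun hPP x) y
    simpa [Matrix.mul_apply, Matrix.one_apply] using this
  have hcol : ∀ i, ∑ x, P x i ^ 2 = 1 := by
    intro i
    have := congrFun (congrFun hPP' i) i
    simpa [Matrix.mul_apply, Matrix.one_apply, sq] using this
  set c : ℝ := (n : ℝ) - k + 1 with hc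
  have hkn' : (k : ℝ) ≤ n := by exact_mod_cast hkn
  have hcpos : 0 < c := by linarith
  have hcW : ((Uᶜ).card : ℝ) = c := by
    rw [Finset.card_compl, hU, Fintype.card_fin, Nat.cast_sub (by omega), Nat.cast_sub hk1, hc]
    push_cast; ring
  let w : Fin n → ℝ := fun i => ∑ x ∈ U, P x i ^ 2 + (∑ x ∈ Uᶜ, P x i) ^ 2 / c
  have hw0 : ∀ i, 0 ≤ w i := fun i => by positivity
  have hw1 : ∀ i, w i ≤ 1 := by
    intro i
    have h := sq_sum_le_card_mul_sum_sq (s := Uᶜ) (f := fun x => P x i)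
    rw [hcW] at h
    have h2 : (∑ x ∈ Uᶜ, P x i) ^ 2 / c ≤ ∑ x ∈ Uᶜ, P x i ^ 2 := by
      rw [div_le_iff₀ hcpos]; linarith
    have h3 := Finset.sum_add_sum_compl U (fun x => P x i ^ 2)
    rw [hcol i] at h3
    simp only [w]; linarith
  have hlin : ∀ l : Fin n → ℝ, ∑ i, l i * w i = ∑ x ∈ U, ∑ i, l i * (P x i * P x i)
      + (∑ x ∈ Uᶜ, ∑ y ∈ Uᶜ, ∑ i, l i * (P x i * P y i)) / c := by
    intro l
    have : ∀ i, l i * w i = ∑ x ∈ U, l i * (P x i * P x i)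
        + (∑ x ∈ Uᶜ, ∑ y ∈ Uᶜ, l i * (P x i * P y i)) / c := by
      intro i
      simp only [w, sq, Finset.sum_mul_sum, ← Finset.mul_sum]
      ring
    simp only [this, Finset.sum_add_distrib, ← Finset.sum_div]
    congr 1
    · exact Finset.sum_comm
    · congr 1
      rw [Finset.sum_comm]
      exact Finset.sum_congr rfl fun x _ => Finset.sum_comm
  have hws : ∑ i, w i = k := by
    have := hlin (fun _ => 1)
    simp only [one_mul, hrow] at this
    rw [this]
    have h2 : ∀ x ∈ Uᶜ, ∑ y ∈ Uᶜ, (if x = y then (1:ℝ) else 0) = 1 := by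
      intro x hx
      rw [Finset.sum_ite_eq, if_pos hx]
    rw [Finset.sum_congr rfl h2]
    simp only [if_true, Finset.sum_const, nsmul_eq_mul, mul_one, hcW, hU]
    rw [div_self hcpos.ne', Nat.cast_sub hk1]; simp
  obtain ⟨s, hs, hle⟩ := kf_aux hM.eigenvalues w k hk1 hkn hw0 hw1 hws
  rw [hlin] at hle
  simp only [← hent] at hle
  refine hle.trans ?_
  rw [Sk, dif_pos hM]
  refine le_csSup ?_ ⟨s, hs, rfl⟩
  refine (Set.Finite.subset (Set.finite_range
    (fun s : Finset (Fin n) => ∑ i ∈ s, hM.eigenvalues i)) ?_).bddAbove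
  rintro x ⟨t, _, rfl⟩
  exact ⟨t, rfl⟩

theorem stmt16 {n : ℕ} (G : SimpleGraph (Fin n)) [DecidableRel G.Adj] (hG : G.Connected)
    (α : ℝ) (hα0 : 0 ≤ α) (hα1 : α < 1)
    (m : ℕ) (hm : G.edgeFinset.card = m)
    (k : ℕ) (hk1 : 1 ≤ k) (hkn : k ≤ n)
    (U : Finset (Fin n)) (hU : U.card = k - 1) :
    Sk (Aalpha α G) k ≥
      (α - 1 / ((n : ℝ) - k + 1)) * (∑ u ∈ U, (G.degree u : ℝ))
        + (2 * m - (1 - α) *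
            (((U ×ˢ Uᶜ).filter (fun p => G.Adj p.1 p.2)).card : ℝ)) / ((n : ℝ) - k + 1) := by
  have hM : (Aalpha α G).IsHermitian := by
    ext x y
    by_cases h : x = y
    · subst h; simp [Aalpha]
    · simp [Aalpha, Matrix.diagonal_apply, h, Ne.symm h, G.adj_comm, SimpleGraph.adjMatrix_apply]
  refine (le_of_eq ?_).trans (kf_main _ hM k hk1 hkn U hU)
  have h1 : ∑ x ∈ U, Aalpha α G x x = α * ∑ u ∈ U, (G.degree u : ℝ) := by
    rw [Finset.mul_sum]
    exact Finset.sum_congr rfl fun x _ => by simp [Aalpha]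
  have hdeg : ∀ x, ∑ y, (if G.Adj x y then (1:ℝ) else 0) = G.degree x := by
    intro x
    rw [Finset.sum_boole, ← G.card_neighborFinset_eq_degree, G.neighborFinset_eq_filter]
  have hcut : (((U ×ˢ Uᶜ).filter (fun p => G.Adj p.1 p.2)).card : ℝ)
      = ∑ x ∈ Uᶜ, ∑ y ∈ U, (if G.Adj x y then (1:ℝ) else 0) := by
    rw [← Finset.sum_boole, Finset.sum_product, Finset.sum_comm]
    simp only [G.adj_comm]
  have hsum : ∑ u ∈ U, (G.degree u : ℝ) + ∑ u ∈ Uᶜ, (G.degree u : ℝ) = 2 * m := by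
    rw [Finset.sum_add_sum_compl, ← hm]
    exact_mod_cast G.sum_degrees_eq_twice_card_edges
  have h2 : ∑ x ∈ Uᶜ, ∑ y ∈ Uᶜ, Aalpha α G x y = ∑ u ∈ Uᶜ, (G.degree u : ℝ)
      - (1 - α) * (((U ×ˢ Uᶜ).filter (fun p => G.Adj p.1 p.2)).card : ℝ) := by
    rw [hcut, Finset.mul_sum, ← Finset.sum_sub_distrib]
    refine Finset.sum_congr rfl fun x hx => ?_
    have h3 := Finset.sum_add_sum_compl U (fun y => if G.Adj x y then (1:ℝ) else 0)
    rw [hdeg] at h3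
    have h4 : ∑ y ∈ Uᶜ, Aalpha α G x y = α * G.degree x
        + (1 - α) * ∑ y ∈ Uᶜ, (if G.Adj x y then (1:ℝ) else 0) := by
      simp only [Aalpha, Matrix.add_apply, Matrix.smul_apply, smul_eq_mul,
        Finset.sum_add_distrib, ← Finset.mul_sum, Matrix.diagonal_apply,
        SimpleGraph.adjMatrix_apply]
      rw [Finset.sum_ite_eq, if_pos hx]
    rw [h4, ← h3]; ring
  rw [h1, h2, ← hsum]
  ring
end

section
/- Let G be a connected graph on n vertices with m edges, chromatic number χ and independence number θ, and let 0 ≤ α < 1. Then S_χ(A_α(G)) ≥ 2αm/θ. -/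
open Matrix Finset Real

/-- The independence number of a graph: the largest size of a set of pairwise
non-adjacent vertices. -/
noncomputable def indepNumber {n : ℕ} (G : SimpleGraph (Fin n)) : ℕ :=
  sSup {k | ∃ s : Finset (Fin n), (∀ u ∈ s, ∀ v ∈ s, ¬G.Adj u v) ∧ s.card = k}

theorem avg_aux {ι : Type*} [DecidableEq ι] (f : ι → ℝ) (k : ℕ) :
    ∀ d : ℕ, ∀ t : Finset ι, t.card = k + d →
      ∃ s : Finset ι, s.card = k ∧ (k : ℝ) * ∑ i ∈ t, f i ≤ t.card * ∑ i ∈ s, f i := by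
  intro d
  induction d with
  | zero => intro t ht; exact ⟨t, by simpa using ht, by rw [ht]; simp⟩
  | succ d ih =>
    intro t ht
    rcases Nat.eq_zero_or_pos k with hk | hk
    · subst hk
      exact ⟨∅, by simp, by simp⟩
    have hne : t.Nonempty := Finset.card_pos.mp (by omega)
    obtain ⟨a, ha, hmin⟩ := Finset.exists_min_image t f hne
    have hc : (t.erase a).card = k + d := by rw [Finset.card_erase_of_mem ha]; omega
    obtain ⟨s, hs, hle⟩ := ih (t.erase a) hc
    refine ⟨s, hs, ?_⟩
    have h1 : f a + ∑ i ∈ t.erase a, f i = ∑ i ∈ t, f i := Finset.add_sum_erase t f ha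
    have h2 : ((k + d : ℕ) : ℝ) * f a ≤ ∑ i ∈ t.erase a, f i := by
      have := Finset.card_nsmul_le_sum (t.erase a) f (f a)
        (fun x hx => hmin x (Finset.mem_of_mem_erase hx))
      rwa [hc, nsmul_eq_mul] at this
    rw [hc] at hle
    rw [ht, ← h1]
    set S := ∑ i ∈ s, f i
    set T := ∑ i ∈ t.erase a, f i
    have hk' : (0 : ℝ) < k := by exact_mod_cast hk
    have hd : (0 : ℝ) ≤ d := Nat.cast_nonneg d
    push_cast at *
    have hp : (0 : ℝ) < k + d := by linarith
    refine le_of_mul_le_mul_left ?_ hp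
    nlinarith [mul_le_mul_of_nonneg_left hle (by linarith : (0 : ℝ) ≤ k + d + 1),
      mul_le_mul_of_nonneg_left h2 hk'.le]

theorem stmt17 {n : ℕ} (G : SimpleGraph (Fin n)) [DecidableRel G.Adj] (hG : G.Connected)
    (α : ℝ) (hα0 : 0 ≤ α) (hα1 : α < 1)
    (m : ℕ) (hm : G.edgeFinset.card = m)
    (χ : ℕ) (hχ : G.chromaticNumber = (χ : ℕ∞))
    (θ : ℕ) (hθ : θ = indepNumber G) :
    Sk (Aalpha α G) χ ≥ 2 * α * m / θ := by
  have hherm : (Aalpha α G).IsHermitian := by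
    unfold Aalpha
    ext i j
    simp [Matrix.diagonal_apply, G.adj_comm]
    by_cases h : i = j
    · subst h; simp
    · simp [h, Ne.symm h]
  have hcol : G.Colorable χ :=
    SimpleGraph.chromaticNumber_le_iff_colorable.mp hχ.le
  have hχn : χ ≤ n := by
    have h1 := SimpleGraph.chromaticNumber_le_iff_colorable.mpr G.colorable_of_fintype
    rw [hχ] at h1
    simpa using h1
  have hn : 0 < n := by
    obtain ⟨v⟩ := hG.nonempty
    exact v.pos
  have hbdd : BddAbove {k | ∃ s : Finset (Fin n), (∀ u ∈ s, ∀ v ∈ s, ¬G.Adj u v) ∧ s.card = k} := by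
    refine ⟨n, ?_⟩
    rintro k ⟨s, -, rfl⟩
    simpa using s.card_le_univ
  have hnle : n ≤ θ * χ := by
    obtain ⟨C⟩ := hcol
    have := Finset.card_le_mul_card_image_of_maps_to (f := C) (s := Finset.univ)
      (t := Finset.univ) (fun _ _ => Finset.mem_univ _) θ (by
        intro b _
        rw [hθ]
        refine le_csSup hbdd ⟨_, ?_, rfl⟩
        intro u hu v hv huv
        simp only [Finset.mem_filter, Finset.mem_univ, true_and] at hu hv
        exact C.valid huv (hu.trans hv.symm))
    simpa using this
  have htr : ∑ i, hherm.eigenvalues i = 2 * α * m := by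
    have h1 := hherm.trace_eq_sum_eigenvalues
    have h2 : (Aalpha α G).trace = 2 * α * m := by
      have h3 : (∑ v, (G.degree v : ℝ)) = 2 * m := by
        rw [← hm]
        exact_mod_cast G.sum_degrees_eq_twice_card_edges
      unfold Aalpha
      rw [Matrix.trace_add, Matrix.trace_smul, Matrix.trace_smul, Matrix.trace_diagonal,
        SimpleGraph.trace_adjMatrix, h3]
      simp only [smul_eq_mul]
      ring
    rw [← h2, h1]
    simp
  obtain ⟨s, hs, hle⟩ := avg_aux hherm.eigenvalues χ (n - χ) Finset.univ (by simp; omega)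
  have hS : ∑ i ∈ s, hherm.eigenvalues i ≤ Sk (Aalpha α G) χ := by
    unfold Sk
    rw [dif_pos hherm]
    refine le_csSup (Set.Finite.bddAbove ?_) ⟨s, hs, rfl⟩
    refine (Set.finite_range
      (fun s : Finset (Fin n) => ∑ i ∈ s, hherm.eigenvalues i)).subset ?_
    rintro x ⟨s, -, rfl⟩
    exact ⟨s, rfl⟩
  refine le_trans ?_ hS
  rw [htr, Finset.card_univ, Fintype.card_fin] at hle
  have hθ0 : 0 < θ := by
    rcases Nat.eq_zero_or_pos θ with h | h
    · rw [h] at hnle; omega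
    · exact h
  have hθ' : (0 : ℝ) < θ := by exact_mod_cast hθ0
  have hn' : (0 : ℝ) < n := by exact_mod_cast hn
  have hnle' : (n : ℝ) ≤ θ * χ := by exact_mod_cast hnle
  have hT : 0 ≤ 2 * α * m := by positivity
  rw [div_le_iff₀ hθ']
  refine le_of_mul_le_mul_left ?_ hn'
  nlinarith [mul_le_mul_of_nonneg_right hnle' hT, mul_le_mul_of_nonneg_left hle hθ'.le]
end
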